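/- Let e₀ ∈ 𝓞_K^{n+1} satisfy B(e₀,e₀) > 0. Then every h ∈ O_F(𝓞_K) that is congruent to the identity modulo 2·B(e₀,e₀) satisfies |σ₁(B(h·e₀, e₀))| ≥ σ₁(B(e₀,e₀)), and consequently B(h·e₀, e₀)² ≥ B(h·e₀, h·e₀)·B(e₀,e₀). -/

import Mathlib

open scoped Matrix

noncomputable section

/-- The bilinear form `B(u,v) = uᵀ F v` associated to a matrix `F`. -/
def bilinForm {m : ℕ} {R : Type*} [CommRing R] (F : Matrix (Fin m) (Fin m) R)
    (u v : Fin m → R) : R :=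
  dotProduct u (F.mulVec v)

/-- The orthogonal group of the bilinear form with matrix `F`, as a subgroup of `GL`. -/
def orthogonalSubgroup {m : ℕ} {R : Type*} [CommRing R] (F : Matrix (Fin m) (Fin m) R) :
    Subgroup (GL (Fin m) R) where
  carrier := {h | ((h : Matrix (Fin m) (Fin m) R))ᵀ * F * (h : Matrix (Fin m) (Fin m) R) = F}
  one_mem' := by simp
  mul_mem' := by
    intro a b ha hb
    simp only [Set.mem_setOf_eq, Units.val_mul, Matrix.transpose_mul] at *
    calc (b : Matrix (Fin m) (Fin m) R)ᵀ * (a : Matrix (Fin m) (Fin m) R)ᵀ * F *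
          ((a : Matrix (Fin m) (Fin m) R) * (b : Matrix (Fin m) (Fin m) R))
        = (b : Matrix (Fin m) (Fin m) R)ᵀ *
            ((a : Matrix (Fin m) (Fin m) R)ᵀ * F * (a : Matrix (Fin m) (Fin m) R)) *
            (b : Matrix (Fin m) (Fin m) R) := by
          simp only [Matrix.mul_assoc]
      _ = F := by rw [ha]; exact hb
  inv_mem' := by
    intro a ha
    simp only [Set.mem_setOf_eq] at *
    have h1 : (a : Matrix (Fin m) (Fin m) R) *
        ((a⁻¹ : GL (Fin m) R) : Matrix (Fin m) (Fin m) R) = 1 := by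
      rw [← Units.val_mul, mul_inv_cancel, Units.val_one]
    calc ((a⁻¹ : GL (Fin m) R) : Matrix (Fin m) (Fin m) R)ᵀ * F *
          ((a⁻¹ : GL (Fin m) R) : Matrix (Fin m) (Fin m) R)
        = ((a⁻¹ : GL (Fin m) R) : Matrix (Fin m) (Fin m) R)ᵀ *
            ((a : Matrix (Fin m) (Fin m) R)ᵀ * F * (a : Matrix (Fin m) (Fin m) R)) *
            ((a⁻¹ : GL (Fin m) R) : Matrix (Fin m) (Fin m) R) := by rw [ha]
      _ = ((a : Matrix (Fin m) (Fin m) R) *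
            ((a⁻¹ : GL (Fin m) R) : Matrix (Fin m) (Fin m) R))ᵀ * F *
            ((a : Matrix (Fin m) (Fin m) R) *
              ((a⁻¹ : GL (Fin m) R) : Matrix (Fin m) (Fin m) R)) := by
          simp only [Matrix.transpose_mul, Matrix.mul_assoc]
      _ = F := by rw [h1]; simp

/-- The real embedding of `𝓞 K` induced by a real embedding `σ` of `K`. -/
def embOK {K : Type*} [Field K] [NumberField K] (σ : K →+* ℝ) :
    NumberField.RingOfIntegers K →+* ℝ :=
  σ.comp (algebraMap (NumberField.RingOfIntegers K) K)

/-- `u` is a `K`-scalar multiple of `v` (both viewed as vectors in `K^m`). -/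
def IsKScalarMultiple {K : Type*} [Field K] [NumberField K] {m : ℕ}
    (u v : Fin m → NumberField.RingOfIntegers K) : Prop :=
  ∃ c : K, (fun t => algebraMap (NumberField.RingOfIntegers K) K (u t)) =
    c • (fun t => algebraMap (NumberField.RingOfIntegers K) K (v t))


/-! The integer `B(h e, e)` is a multiple of `B(e, e)`, nonzero because the cofactor is congruent
to `1` modulo a non-unit, so its norm is at least that of `B(e, e)`. At every real embedding other
than `σ₁` the form is positive semidefinite and `h` preserves it, so Cauchy–Schwarz gives
`|τ (B(h e, e))| ≤ |τ (B(e, e))|`. Since the norm is the product over all embeddings, the reverse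
inequality must hold at `σ₁`. -/

section BilinForm

variable {m : ℕ} {R : Type*} [CommRing R]

theorem map_bilinForm {S : Type*} [CommRing S] (f : R →+* S) (F : Matrix (Fin m) (Fin m) R)
    (u v : Fin m → R) : f (bilinForm F u v) = bilinForm (F.map f) (f ∘ u) (f ∘ v) := by
  simp [bilinForm, dotProduct, Matrix.mulVec, map_sum]

theorem bilinForm_mulVec_mulVec (F H : Matrix (Fin m) (Fin m) R) (u v : Fin m → R) :
    bilinForm F (H *ᵥ u) (H *ᵥ v) = bilinForm (Hᵀ * F * H) u v := by
  simp only [bilinForm, ← Matrix.mulVec_mulVec, Matrix.dotProduct_mulVec u, Matrix.vecMul_transpose]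

theorem dotProduct_mem_of_forall_mem {ι : Type*} [Fintype ι] {I : Ideal R} {u : ι → R}
    (hu : ∀ i, u i ∈ I) (v : ι → R) : u ⬝ᵥ v ∈ I :=
  Submodule.sum_mem I fun i _ => I.mul_mem_right (v i) (hu i)

theorem bilinForm_mulVec_sub_bilinForm_mem {I : Ideal R} (F : Matrix (Fin m) (Fin m) R)
    {H : Matrix (Fin m) (Fin m) R} (hH : ∀ s t, (H - 1) s t ∈ I) (u v : Fin m → R) :
    bilinForm F (H *ᵥ u) v - bilinForm F u v ∈ I := by
  have hsub : bilinForm F (H *ᵥ u) v - bilinForm F u v = bilinForm F ((H - 1) *ᵥ u) v := by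
    simp only [bilinForm, Matrix.sub_mulVec, Matrix.one_mulVec, sub_dotProduct]
  have hmulVec (s : Fin m) : ((H - 1) *ᵥ u) s ∈ I := dotProduct_mem_of_forall_mem (hH s) u
  rw [hsub]
  exact dotProduct_mem_of_forall_mem hmulVec _

theorem bilinForm_comm {F : Matrix (Fin m) (Fin m) R} (hF : F.IsSymm) (u v : Fin m → R) :
    bilinForm F u v = bilinForm F v u := by
  rw [bilinForm, bilinForm, dotProduct_comm, ← Matrix.vecMul_transpose, hF.eq,
    Matrix.dotProduct_mulVec]

theorem sq_bilinForm_le_of_posSemidef {M : Matrix (Fin m) (Fin m) ℝ} (hM : M.PosSemidef)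
    (u v : Fin m → ℝ) : bilinForm M u v ^ 2 ≤ bilinForm M u u * bilinForm M v v := by
  have happly : ∀ x y, M.toBilin' x y = bilinForm M x y := Matrix.toBilin'_apply' M
  have hnonneg : ∀ x, 0 ≤ M.toBilin' x x := fun x => by
    simpa only [happly, bilinForm, star_trivial] using hM.dotProduct_mulVec_nonneg x
  have hCS := LinearMap.BilinForm.apply_mul_apply_le_of_forall_zero_le _ hnonneg u v
  have hsymm : M.IsSymm := hM.isHermitian
  simpa only [happly, bilinForm_comm hsymm v u, ← sq] using hCS

theorem abs_map_bilinForm_mulVec_le {F H : Matrix (Fin m) (Fin m) R} (f : R →+* ℝ)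
    (hF : (F.map f).PosSemidef) (hH : Hᵀ * F * H = F) (e : Fin m → R) :
    |f (bilinForm F (H *ᵥ e) e)| ≤ |f (bilinForm F e e)| := by
  have hisom : bilinForm F (H *ᵥ e) (H *ᵥ e) = bilinForm F e e := by
    rw [bilinForm_mulVec_mulVec, hH]
  refine sq_le_sq.1 ?_
  calc f (bilinForm F (H *ᵥ e) e) ^ 2
      ≤ f (bilinForm F (H *ᵥ e) (H *ᵥ e)) * f (bilinForm F e e) := by
        simpa only [map_bilinForm] using sq_bilinForm_le_of_posSemidef hF (f ∘ (H *ᵥ e)) (f ∘ e)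
    _ = f (bilinForm F e e) ^ 2 := by rw [hisom, sq]

end BilinForm

theorem ne_zero_of_mul_dvd_sub_of_not_isUnit {R : Type*} [CommRing R] [IsDomain R] {a b q : R}
    (hq : ¬IsUnit q) (ha : a ≠ 0) (hab : q * a ∣ b - a) : b ≠ 0 := by
  rintro rfl
  have hqa : q * a ∣ 1 * a := by simpa using hab
  exact hq (isUnit_of_dvd_one ((mul_dvd_mul_iff_right ha).1 hqa))

section NumberField

open NumberField

theorem isTotallyReal_of_forall_eq_ofRealHom_comp {K : Type*} [Field K]
    (hreal : ∀ φ : K →+* ℂ, ∃ τ : K →+* ℝ, φ = Complex.ofRealHom.comp τ) : IsTotallyReal K where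
  isReal w := by
    obtain ⟨τ, hτ⟩ := hreal w.embedding
    refine InfinitePlace.isReal_iff.2 ?_
    ext x
    simp [hτ]

variable {K : Type*} [Field K] [NumberField K]

theorem abs_norm_le_abs_norm_of_dvd {a b : 𝓞 K} (hab : a ∣ b) (hb : b ≠ 0) :
    |Algebra.norm ℚ (a : K)| ≤ |Algebra.norm ℚ (b : K)| := by
  have hdvd : Algebra.norm ℤ a ∣ Algebra.norm ℤ b := map_dvd _ hab
  have hle : |Algebra.norm ℤ a| ≤ |Algebra.norm ℤ b| :=
    Int.le_of_dvd (abs_pos.2 (Algebra.norm_ne_zero_iff.2 hb)) ((abs_dvd_abs _ _).2 hdvd)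
  rw [← Algebra.coe_norm_int, ← Algebra.coe_norm_int]
  exact_mod_cast hle

theorem infinitePlace_le_of_dvd_of_forall_ne_le {a b : 𝓞 K} (hab : a ∣ b) (hb : b ≠ 0)
    (w₁ : InfinitePlace K) (hle : ∀ w ≠ w₁, w (b : K) ≤ w (a : K)) :
    w₁ (a : K) ≤ w₁ (b : K) := by
  by_contra! hlt
  have hpos (w : InfinitePlace K) : 0 < w (b : K) ^ w.mult :=
    pow_pos (w.pos_iff.2 (RingOfIntegers.coe_ne_zero_iff.2 hb)) _
  have hprod : ∏ w : InfinitePlace K, w (b : K) ^ w.mult <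
      ∏ w : InfinitePlace K, w (a : K) ^ w.mult := by
    refine Finset.prod_lt_prod (fun w _ => hpos w) (fun w _ => ?_) ⟨w₁, Finset.mem_univ _, ?_⟩
    · have hw : w (b : K) ≤ w (a : K) := by
        rcases eq_or_ne w w₁ with rfl | hne
        exacts [hlt.le, hle w hne]
      gcongr
    · exact pow_lt_pow_left₀ hlt (apply_nonneg _ _) w₁.mult_ne_zero
  rw [InfinitePlace.prod_eq_abs_norm, InfinitePlace.prod_eq_abs_norm, Rat.cast_lt] at hprod
  exact hprod.not_ge (abs_norm_le_abs_norm_of_dvd hab hb)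

theorem abs_embOK_le_of_dvd_of_forall_ne_le [IsTotallyReal K] {a b : 𝓞 K} (hab : a ∣ b)
    (hb : b ≠ 0) (σ₁ : K →+* ℝ) (hle : ∀ τ ≠ σ₁, |embOK τ b| ≤ |embOK τ a|) :
    |embOK σ₁ a| ≤ |embOK σ₁ b| := by
  have hplace (x : 𝓞 K) : InfinitePlace.mk (Complex.ofRealHom.comp σ₁) (x : K) = |embOK σ₁ x| :=
    Complex.norm_real _
  rw [← hplace, ← hplace]
  refine infinitePlace_le_of_dvd_of_forall_ne_le hab hb _ fun w hw => ?_
  have hreal : w.IsReal := IsTotallyReal.isReal w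
  have hne : InfinitePlace.embedding_of_isReal hreal ≠ σ₁ := by
    rintro rfl
    refine hw ?_
    ext x
    exact (InfinitePlace.norm_embedding_of_isReal hreal x).symm.trans (Complex.norm_real _).symm
  simp only [← InfinitePlace.norm_embedding_of_isReal hreal]
  exact hle _ hne

variable (K) in
theorem not_isUnit_two_ringOfIntegers : ¬IsUnit (2 : 𝓞 K) := fun h => by
  have htwo : IsUnit (2 : ℤ) := isUnit_of_map_unit (algebraMap ℤ (𝓞 K)) 2 (by simpa using h)
  norm_num [Int.isUnit_iff] at htwo

theorem congruence_elements_keep_hyperplane_apart_from_itself_general [IsTotallyReal K]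
    (σ₁ : K →+* ℝ) {m : ℕ} {F : Matrix (Fin m) (Fin m) (𝓞 K)}
    (hF : ∀ τ ≠ σ₁, (F.map (embOK τ)).PosSemidef) (e : Fin m → 𝓞 K)
    {H : Matrix (Fin m) (Fin m) (𝓞 K)} (hH : Hᵀ * F * H = F) {q : 𝓞 K} (hq : ¬IsUnit q)
    (hcong : ∀ s t, (H - 1) s t ∈ Ideal.span {q * bilinForm F e e}) :
    |embOK σ₁ (bilinForm F e e)| ≤ |embOK σ₁ (bilinForm F (H *ᵥ e) e)| ∧
      embOK σ₁ (bilinForm F (H *ᵥ e) (H *ᵥ e)) * embOK σ₁ (bilinForm F e e) ≤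
        embOK σ₁ (bilinForm F (H *ᵥ e) e) ^ 2 := by
  have hdvd : q * bilinForm F e e ∣ bilinForm F (H *ᵥ e) e - bilinForm F e e :=
    Ideal.mem_span_singleton.1 (bilinForm_mulVec_sub_bilinForm_mem F hcong e e)
  have habs : |embOK σ₁ (bilinForm F e e)| ≤ |embOK σ₁ (bilinForm F (H *ᵥ e) e)| := by
    rcases eq_or_ne (bilinForm F e e) 0 with hzero | hne
    · simp [hzero]
    · exact abs_embOK_le_of_dvd_of_forall_ne_le
        (dvd_sub_self_right.1 (dvd_of_mul_left_dvd hdvd))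
        (ne_zero_of_mul_dvd_sub_of_not_isUnit hq hne hdvd) σ₁
        fun τ hτ => abs_map_bilinForm_mulVec_le (embOK τ) (hF τ hτ) hH e
  refine ⟨habs, ?_⟩
  rw [bilinForm_mulVec_mulVec, hH, ← sq]
  exact sq_le_sq.2 habs

end NumberField

/-- Self-separation estimate from the proof of the generalised Margulis–Vinberg lemma.
Let `K` be a totally real number field with real embeddings `σ 0, …, σ (d-1)` (the family
`σ` enumerates all of them without repetition and every complex embedding of `K` factors
through one of them), with distinguished embedding `σ j₁`; positivity of elements of `K`
refers to images under `σ j₁`.  Let `F` be a symmetric matrix over `𝓞 K` of size `n+1`,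
`n ≥ 2`, with `σ j (F)` positive definite for all `j ≠ j₁`.  Suppose
`e₀ ∈ 𝓞 K^{n+1}` satisfies `B(e₀,e₀) > 0`.  Then every `h ∈ O_F(𝓞 K)` congruent to the
identity modulo `2·B(e₀,e₀)` satisfies `|σ₁(B(h·e₀,e₀))| ≥ σ₁(B(e₀,e₀))`, and
consequently `B(h·e₀,e₀)² ≥ B(h·e₀,h·e₀)·B(e₀,e₀)`. -/
theorem congruence_elements_keep_hyperplane_apart_from_itself
    (K : Type*) [Field K] [NumberField K]
    (d : ℕ) (σ : Fin d → (K →+* ℝ))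
    (hσinj : Function.Injective σ)
    (hσall : ∀ τ : K →+* ℝ, ∃ j : Fin d, τ = σ j)
    (htotreal : ∀ φ : K →+* ℂ, ∃ j : Fin d, φ = Complex.ofRealHom.comp (σ j))
    (j₁ : Fin d)
    (n : ℕ) (hn : 2 ≤ n)
    (F : Matrix (Fin (n + 1)) (Fin (n + 1)) (NumberField.RingOfIntegers K))
    (hFsymm : F.IsSymm)
    (hFpos : ∀ j : Fin d, j ≠ j₁ → (F.map (embOK (σ j))).PosDef)
    (e₀ : Fin (n + 1) → NumberField.RingOfIntegers K)
    (hpos₀ : 0 < embOK (σ j₁) (bilinForm F e₀ e₀))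
    (h : GL (Fin (n + 1)) (NumberField.RingOfIntegers K))
    (hmem : h ∈ orthogonalSubgroup F)
    (hcong : ∀ s t : Fin (n + 1),
      ((h : Matrix (Fin (n + 1)) (Fin (n + 1)) (NumberField.RingOfIntegers K)) - 1) s t ∈
        Ideal.span {2 * bilinForm F e₀ e₀}) :
    |embOK (σ j₁) (bilinForm F
        ((h : Matrix (Fin (n + 1)) (Fin (n + 1)) (NumberField.RingOfIntegers K)).mulVec e₀)
        e₀)| ≥ embOK (σ j₁) (bilinForm F e₀ e₀) ∧
    (embOK (σ j₁) (bilinForm F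
        ((h : Matrix (Fin (n + 1)) (Fin (n + 1)) (NumberField.RingOfIntegers K)).mulVec e₀)
        e₀)) ^ 2 ≥
      embOK (σ j₁) (bilinForm F
        ((h : Matrix (Fin (n + 1)) (Fin (n + 1)) (NumberField.RingOfIntegers K)).mulVec e₀)
        ((h : Matrix (Fin (n + 1)) (Fin (n + 1)) (NumberField.RingOfIntegers K)).mulVec e₀)) *
      embOK (σ j₁) (bilinForm F e₀ e₀) := by
  have := isTotallyReal_of_forall_eq_ofRealHom_comp fun φ => (htotreal φ).imp' σ fun _ => id
  have hF : ∀ τ ≠ σ j₁, (F.map (embOK τ)).PosSemidef := fun τ hτ => by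
    obtain ⟨j, rfl⟩ := hσall τ
    exact (hFpos j (ne_of_apply_ne σ hτ)).posSemidef
  exact (congruence_elements_keep_hyperplane_apart_from_itself_general (σ j₁) hF e₀ hmem
    (not_isUnit_two_ringOfIntegers K) hcong).imp_left (le_abs_self _).trans

end
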